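/- Fix k ≠ l and let m = m_{kl}. The alternating product G_kG_lG_k⋯ with m + 1 factors (starting with G_k) and the alternating product G_lG_kG_l⋯ with m + 1 factors (starting with G_l) both lie in the two-sided ideal (B) of 𝔇 generated by the Coxeter braid relators. -/

import Mathlib

open scoped TensorProduct

noncomputable section

abbrev Vd (d : ℕ) := Fin d → ℂ
abbrev Ad (d : ℕ) := MvPolynomial (Fin d) ℂ

/-- Action of `g ∈ GL(V)` on polynomials: substitute `X j ↦ (g⁻¹ x)_j`. -/
def glAct {d : ℕ} (g : GL (Fin d) ℂ) : Ad d →ₐ[ℂ] Ad d :=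
  MvPolynomial.aeval fun j =>
    ∑ k, ((g⁻¹ : GL (Fin d) ℂ) : Matrix (Fin d) (Fin d) ℂ) j k • MvPolynomial.X k

/-- Embedding of linear forms on `V` as degree-one polynomials. -/
def lin {d : ℕ} (θ : Vd d →ₗ[ℂ] ℂ) : Ad d :=
  ∑ j, θ (Pi.single j 1) • MvPolynomial.X j

structure CoxeterSetup (d n : ℕ) where
  Γ : Subgroup (GL (Fin d) ℂ)
  finite : Finite Γ
  s : Fin n → Γ
  gen : Subgroup.closure (Set.range s) = (⊤ : Subgroup Γ)
  α : Fin n → (Vd d →ₗ[ℂ] ℂ)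
  coroot : Fin n → Vd d
  pairing : ∀ i, α i (coroot i) = 2
  refl : ∀ i (v : Vd d),
    ((s i : GL (Fin d) ℂ) : Matrix (Fin d) (Fin d) ℂ).mulVec v = v - α i v • coroot i

/-- The subalgebra of `Γ'`-invariant polynomials. -/
def FixedSub {d n : ℕ} (S : CoxeterSetup d n) (Γ' : Subgroup S.Γ) : Subalgebra ℂ (Ad d) where
  carrier := {f | ∀ g ∈ Γ', glAct (g : GL (Fin d) ℂ) f = f}
  mul_mem' := fun hf hg g hgmem => by simp [map_mul, hf g hgmem, hg g hgmem]
  add_mem' := fun hf hg g hgmem => by simp [map_add, hf g hgmem, hg g hgmem]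
  algebraMap_mem' := fun c g _ => by simp

/-- `M` (with `Γ'`-action `ρ`) descends to `A^{Γ'}`. -/
def Descends {d n : ℕ} (S : CoxeterSetup d n) (Γ' : Subgroup S.Γ) (M : Type)
    [AddCommGroup M] [Module ℂ M] [Module (Ad d) M] [IsScalarTower ℂ (Ad d) M]
    (ρ : Γ' →* Module.End ℂ M) : Prop :=
  ∃ (N : Type) (_ : AddCommGroup N) (_ : Module (FixedSub S Γ') N)
    (e : ((Ad d) ⊗[FixedSub S Γ'] N) ≃ₗ[Ad d] M),
    ∀ (g : Γ') (a : Ad d) (x : N),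
      ρ g (e (a ⊗ₜ x)) = e ((glAct ((g : S.Γ) : GL (Fin d) ℂ) a) ⊗ₜ x)

/-- Alternating product `x·y·x·⋯` with `m` factors, starting with `x`. -/
def altProd {M : Type*} [Monoid M] (x y : M) : ℕ → M
  | 0 => 1
  | (j + 1) => x * altProd y x j

/-- The order `m_{ij}` of `sᵢ sⱼ` in `Γ`. -/
def mOrd {d n : ℕ} (S : CoxeterSetup d n) (i j : Fin n) : ℕ :=
  orderOf (S.s i * S.s j)

/-- Relations presenting the Demazure descent algebra `𝔇`: the inclusion of `A` is a
`ℂ`-algebra map, `Gᵢ² = 0`, and `Gᵢ·θ = θ(αᵢ^∨) + sᵢ(θ)·Gᵢ` for linear forms `θ`. -/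
inductive DRel {d n : ℕ} (S : CoxeterSetup d n) :
    FreeAlgebra ℂ (Ad d ⊕ Fin n) → FreeAlgebra ℂ (Ad d ⊕ Fin n) → Prop
  | add (a b : Ad d) :
      DRel S (FreeAlgebra.ι ℂ (Sum.inl a) + FreeAlgebra.ι ℂ (Sum.inl b))
        (FreeAlgebra.ι ℂ (Sum.inl (a + b)))
  | mul (a b : Ad d) :
      DRel S (FreeAlgebra.ι ℂ (Sum.inl a) * FreeAlgebra.ι ℂ (Sum.inl b))
        (FreeAlgebra.ι ℂ (Sum.inl (a * b)))
  | scalar (c : ℂ) :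
      DRel S (algebraMap ℂ _ c) (FreeAlgebra.ι ℂ (Sum.inl (algebraMap ℂ (Ad d) c)))
  | sq (i : Fin n) :
      DRel S (FreeAlgebra.ι ℂ (Sum.inr i) * FreeAlgebra.ι ℂ (Sum.inr i)) 0
  | straighten (i : Fin n) (θ : Vd d →ₗ[ℂ] ℂ) :
      DRel S (FreeAlgebra.ι ℂ (Sum.inr i) * FreeAlgebra.ι ℂ (Sum.inl (lin θ)))
        (algebraMap ℂ _ (θ (S.coroot i)) +
          FreeAlgebra.ι ℂ (Sum.inl (glAct ((S.s i : S.Γ) : GL (Fin d) ℂ) (lin θ))) *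
            FreeAlgebra.ι ℂ (Sum.inr i))

/-- The Demazure descent algebra `𝔇`. -/
abbrev DD {d n : ℕ} (S : CoxeterSetup d n) := RingQuot (DRel S)

/-- The generator `Gᵢ ∈ 𝔇`. -/
def GG {d n : ℕ} (S : CoxeterSetup d n) (i : Fin n) : DD S :=
  RingQuot.mkRingHom (DRel S) (FreeAlgebra.ι ℂ (Sum.inr i))

/-- The canonical ring homomorphism `A → 𝔇`. -/
def ofA {d n : ℕ} (S : CoxeterSetup d n) : Ad d →+* DD S where
  toFun a := RingQuot.mkRingHom (DRel S) (FreeAlgebra.ι ℂ (Sum.inl a))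
  map_one' := by
    have h := RingQuot.mkRingHom_rel (DRel.scalar (S := S) 1)
    simpa using h.symm
  map_mul' a b := by
    exact ((RingQuot.mkRingHom_rel (DRel.mul (S := S) a b)).symm).trans (map_mul _ _ _)
  map_zero' := by
    have h := RingQuot.mkRingHom_rel (DRel.scalar (S := S) 0)
    simpa using h.symm
  map_add' a b := by
    exact ((RingQuot.mkRingHom_rel (DRel.add (S := S) a b)).symm).trans (map_add _ _ _)

/-- The element `σᵢ := 1 − αᵢ·Gᵢ ∈ 𝔇`. -/
def sigmaD {d n : ℕ} (S : CoxeterSetup d n) (i : Fin n) : DD S :=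
  1 - ofA S (lin (S.α i)) * GG S i

/-- The set of Coxeter braid relators `B_{ij}`. -/
def coxeterBraidSet {d n : ℕ} (S : CoxeterSetup d n) : Set (DD S) :=
  {x | ∃ i j : Fin n, i ≠ j ∧
    x = altProd (sigmaD S i) (sigmaD S j) (mOrd S i j) -
        altProd (sigmaD S j) (sigmaD S i) (mOrd S i j)}

/-- The set of Demazure braid relators `B^D_{ij}`. -/
def demazureBraidSet {d n : ℕ} (S : CoxeterSetup d n) : Set (DD S) :=
  {x | ∃ i j : Fin n, i ≠ j ∧
    x = altProd (GG S i) (GG S j) (mOrd S i j) -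
        altProd (GG S j) (GG S i) (mOrd S i j)}

/-- The product in `𝔇` of the generators `G` along a word. -/
def wordProd {d n : ℕ} (S : CoxeterSetup d n) (w : List (Fin n)) : DD S :=
  (w.map (GG S)).prod

/-- The sequence of roots `α_k, s_k(α_l), s_k s_l(α_k), …` as degree-one polynomials. -/
def rootSeqP {d n : ℕ} (S : CoxeterSetup d n) (k l : Fin n) (j : ℕ) : Ad d :=
  glAct ((altProd (S.s k) (S.s l) j : S.Γ) : GL (Fin d) ℂ)
    (lin (S.α (if Even j then k else l)))

/-- `Δ_{k,l}`, the product of the `m_{kl}` roots `α_k, s_k(α_l), s_k s_l(α_k), …`. -/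
def DeltaP {d n : ℕ} (S : CoxeterSetup d n) (k l : Fin n) : Ad d :=
  ∏ j ∈ Finset.range (mOrd S k l), rootSeqP S k l j

/-!
Let `m = m_{kl} = p + 1` and work modulo the braid relator `B_{kl}`. The linear form
`θ = 2 α_l - α_l(α_k^∨) α_k` is fixed by `s_k`, and its orbit `x_0 = θ`, `x_1 = s_l θ`,
`x_2 = s_k s_l θ`, … consists of `x_0, …, x_p`: each difference `x_r - x_{r+1}` with `r < p` is a
nonzero multiple of a simple root, and `x_{p+1} = x_p`.

Since `σ_i a = s_i(a) σ_i` for `a ∈ A`, and `σ_i` fixes every word starting with `G_i`, the product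
`⋯σ_kσ_l` acts on an alternating word `W` by a Newton interpolation sum at the nodes `x_r`, whose
divided differences are the longer alternating words. The braid relation compares two such sums,
and what remains is `Δ W' = 0` for every alternating word `W'` with more than `m` factors, where
`Δ` is the product of the `m` roots.

By the straightening relation, the polynomials killing all these words form an ideal `J` stable
under the divided differences `a ↦ (a - s_i(a)) / α_i`. Let `P = ∏_r (X - x_r)`, whose coefficients
are invariant. Up to units, `P'(x_p)` is a divided difference of `Δ`, so `J` contains `P'(x_p)` and
by invariance `P'(x_0)`. The iterated divided difference of `P'` at `x_0, …, x_p` is its leading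
coefficient `m`, a unit; hence `J = A` and the words vanish.
-/

section Periodic

variable {β : Type*} {f : ℕ → β}

theorem eq_of_periodic_two (hf : Function.Periodic f 2) {r n : ℕ} (h : Even (r + n)) :
    f r = f n := by
  have hmod : r % 2 = n % 2 := by have := Nat.even_iff.mp h; lia
  rw [← hf.map_mod_nat, hmod, hf.map_mod_nat]

theorem eq_or_eq_succ_of_periodic_two (hf : Function.Periodic f 2) (r n : ℕ) :
    f r = f n ∨ f r = f (n + 1) :=
  (Nat.even_or_odd (r + n)).imp (eq_of_periodic_two hf)
    fun h => eq_of_periodic_two hf (by simpa [← add_assoc] using h.add_one)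

end Periodic

section AltProd

variable {M N : Type*}

theorem altProd_succ [Monoid M] (x y : M) (n : ℕ) : altProd x y (n + 1) = x * altProd y x n :=
  rfl

theorem map_altProd {F : Type*} [Monoid M] [Monoid N] [FunLike F M N] [MonoidHomClass F M N]
    (f : F) (x y : M) (n : ℕ) : f (altProd x y n) = altProd (f x) (f y) n := by
  induction n generalizing x y with
  | zero => exact map_one f
  | succ n ih => rw [altProd_succ, altProd_succ, map_mul, ih]

theorem mul_mul_pow_swap [Monoid M] (x y : M) (n : ℕ) : x * (y * x) ^ n = (x * y) ^ n * x :=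
  (SemiconjBy.pow_right (show SemiconjBy x (y * x) (x * y) from (mul_assoc x y x).symm) n).eq

theorem altProd_two_mul [Monoid M] (x y : M) (n : ℕ) : altProd x y (2 * n) = (x * y) ^ n := by
  induction n with
  | zero => rw [mul_zero, pow_zero, altProd]
  | succ n ih => rw [Nat.mul_succ, altProd_succ, altProd_succ, ih, pow_succ', mul_assoc]

theorem altProd_two_mul_add_one [Monoid M] (x y : M) (n : ℕ) :
    altProd x y (2 * n + 1) = (x * y) ^ n * x := by
  rw [altProd_succ, altProd_two_mul, mul_mul_pow_swap]

theorem altProd_two_mul_add_three [Monoid M] (x y : M) (n : ℕ) :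
    altProd x y (2 * (n + 1) + 1) = x * altProd y x (2 * n + 1) * x := by
  rw [altProd_two_mul_add_one, altProd_two_mul_add_one, ← mul_assoc x, mul_mul_pow_swap,
    pow_succ, ← mul_assoc]

theorem altProd_eq_pow_mul [Monoid M] {x y : M} (hx : x * x = 1) (hy : y * y = 1) {a b n : ℕ}
    (h : a + b = 2 * n) : altProd x y a = (x * y) ^ n * altProd y x b := by
  induction a generalizing x y b with
  | zero =>
    obtain rfl : b = 2 * n := by lia
    have hxy : x * y * (y * x) = 1 := by rw [mul_assoc, ← mul_assoc y, hy, one_mul, hx]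
    rw [altProd_two_mul, pow_mul_pow_eq_one n hxy, altProd]
  | succ a ih =>
    rw [altProd_succ, ih hy hx (b := b + 1) (by lia), altProd_succ, ← mul_assoc, mul_mul_pow_swap,
      mul_assoc, ← mul_assoc x x, hx, one_mul]

theorem altProd_eq_of_add_eq_two_mul [Monoid M] {x y : M} (hx : x * x = 1) (hy : y * y = 1)
    {a b m : ℕ} (hxy : (x * y) ^ m = 1) (h : a + b = 2 * m) : altProd x y a = altProd y x b := by
  rw [altProd_eq_pow_mul hx hy h, hxy, one_mul]

end AltProd

/-- The sequence `k, l, k, l, …`. -/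
def alternate {ι : Type*} (k l : ι) (r : ℕ) : ι :=
  if Even r then k else l

theorem alternate_succ {ι : Type*} (k l : ι) (r : ℕ) : alternate k l (r + 1) = alternate l k r := by
  simp only [alternate, Nat.even_add_one, ite_not]

theorem alternate_periodic {ι : Type*} (k l : ι) : Function.Periodic (alternate k l) 2 :=
  fun r => by
    rw [show r + 2 = r + 1 + 1 from rfl, alternate_succ, alternate_succ]

/-- The product `t r * ⋯ * t 2 * t 1` of the terms of a sequence in descending order. -/
def descProd {M : Type*} [Monoid M] (t : ℕ → M) : ℕ → M
  | 0 => 1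
  | r + 1 => t (r + 1) * descProd t r

section DescProd

variable {M : Type*} [Monoid M] {t : ℕ → M}

theorem descProd_succ (t : ℕ → M) (r : ℕ) : descProd t (r + 1) = t (r + 1) * descProd t r :=
  rfl

theorem descProd_eq_altProd (ht : Function.Periodic t 2) (r : ℕ) :
    descProd t r = altProd (t r) (t (r + 1)) r := by
  induction r with
  | zero => rfl
  | succ r ih => rw [descProd_succ, ih, altProd_succ, ht r]

theorem descProd_mul_zero (ht : Function.Periodic t 2) (r : ℕ) :
    descProd t r * t 0 = altProd (t r) (t (r + 1)) (r + 1) := by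
  induction r with
  | zero => simp [descProd, altProd]
  | succ r ih => rw [descProd_succ, mul_assoc, ih, altProd_succ _ _ (r + 1), ht r]

theorem isUnit_descProd (h : ∀ r, IsUnit (t r)) (r : ℕ) : IsUnit (descProd t r) := by
  induction r with
  | zero => exact isUnit_one
  | succ r ih => exact (h (r + 1)).mul ih

theorem descProd_eq_mul_pow (ht : Function.Periodic t 2) (hsq : ∀ r, t r * t r = 1) {r c n : ℕ}
    (h : r + c + 1 = 2 * n) : descProd t r = descProd t c * t 0 * (t 0 * t 1) ^ n := by
  induction c generalizing r with
  | zero =>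
    have hr : t r = t 1 := eq_of_periodic_two ht ⟨n, by lia⟩
    have hr' : t (r + 1) = t 0 := eq_of_periodic_two ht ⟨n, by lia⟩
    rw [← altProd_two_mul, ← h, add_zero, altProd_succ, descProd_eq_altProd ht, hr, hr', descProd,
      one_mul, ← mul_assoc, hsq, one_mul]
  | succ c ih =>
    have hc : t (r + 1) = t (c + 1) := eq_of_periodic_two ht ⟨n, by lia⟩
    rw [descProd_succ t c, mul_assoc (t (c + 1)), mul_assoc (t (c + 1)), ← ih (r := r + 1) (by lia),
      descProd_succ, hc, ← mul_assoc, hsq, one_mul]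

theorem descProd_succ_eq_of_braid (ht : Function.Periodic t 2) {p : ℕ}
    (h : altProd (t 0) (t 1) (p + 1) = altProd (t 1) (t 0) (p + 1)) :
    descProd t (p + 1) = descProd t p * t 0 := by
  have braid (r : ℕ) : altProd (t r) (t (r + 1)) (p + 1) = altProd (t (r + 1)) (t r) (p + 1) := by
    induction r with
    | zero => exact h
    | succ r ih => rw [ht r, ih]
  rw [descProd_mul_zero ht, descProd_eq_altProd ht, ht p, braid p]

end DescProd

section Nodal

open Polynomial Lagrange

variable {A : Type*} [CommRing A]

theorem nodal_range_succ (x : ℕ → A) (n : ℕ) :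
    nodal (Finset.range (n + 1)) x = nodal (Finset.range n) x * (X - C (x n)) :=
  Finset.prod_range_succ _ n

theorem eval_nodal_range_succ (x : ℕ → A) (n : ℕ) (y : A) :
    (nodal (Finset.range (n + 1)) x).eval y = (nodal (Finset.range n) x).eval y * (y - x n) := by
  rw [nodal_range_succ, eval_mul, eval_sub, eval_X, eval_C]

end Nodal

/-- A sequence of reflections alternating between two involutions `S 0`, `S 1` of a ring, together
with the orbit of a point `x 0` fixed by `S 0` under the products `S r ⋯ S 2 S 1`. -/
structure IsNodeSequence {A : Type*} [CommRing A] (S : ℕ → A →+* A) (x : ℕ → A) : Prop where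
  periodic : Function.Periodic S 2
  involutive (r : ℕ) : Function.Involutive (S r)
  map_zero : S 0 (x 0) = x 0
  map_succ (r : ℕ) : S (r + 1) (x r) = x (r + 1)

namespace IsNodeSequence

open Polynomial Lagrange

variable {A : Type*} [CommRing A] {S : ℕ → A →+* A} {x : ℕ → A}

theorem map_self_succ (h : IsNodeSequence S x) (r : ℕ) : S (r + 1) (x (r + 1)) = x r := by
  rw [← h.map_succ, h.involutive]

theorem map_nodal (h : IsNodeSequence S x) (n : ℕ) :
    (nodal (Finset.range n) x).map (S (n + 1)) = nodal (Finset.range n) x := by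
  induction n using Nat.twoStepInduction with
  | zero => simp
  | one => simp [nodal, h.periodic 0, h.map_zero]
  | more n ih _ =>
    have hS : S (n + 2 + 1) = S (n + 1) := h.periodic (n + 1)
    simp only [nodal_range_succ, Polynomial.map_mul, Polynomial.map_sub, map_X, map_C,
      hS, h.map_succ, h.map_self_succ] at ih ⊢
    rw [ih, mul_right_comm]

end IsNodeSequence

/-- A node sequence whose consecutive differences `x r - x (r + 1)` are nonzero multiples of the
roots `α (r + 1)` until it stops moving at `x p = x (p + 1)`. -/
structure IsClosedNodeSequence (K : Type*) {A : Type*} [Field K] [CommRing A] [Algebra K A]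
    (S : ℕ → A →+* A) (α x : ℕ → A) (p : ℕ) : Prop extends IsNodeSequence S x where
  exists_sub_eq_smul {r : ℕ} (hr : r < p) : ∃ c : K, c ≠ 0 ∧ x r - x (r + 1) = c • α (r + 1)
  node_succ_eq : x (p + 1) = x p

namespace IsClosedNodeSequence

open Polynomial Lagrange

variable {K A : Type*} [Field K] [CommRing A] [Algebra K A] {S : ℕ → A →+* A} {α x : ℕ → A} {p : ℕ}

theorem associated_sub (h : IsClosedNodeSequence K S α x p) {r : ℕ} (hr : r < p) :
    Associated (α (r + 1)) (x r - x (r + 1)) := by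
  obtain ⟨c, hc, hx⟩ := h.exists_sub_eq_smul hr
  rw [hx, Algebra.smul_def]
  exact (associated_isUnit_mul_right_iff ((IsUnit.mk0 c hc).map (algebraMap K A))).mpr (.refl _)

theorem map_eval_nodal (h : IsClosedNodeSequence K S α x p) :
    S (p + 1) ((nodal (Finset.range p) x).eval (x p)) = (nodal (Finset.range p) x).eval (x p) := by
  rw [← eval_map_apply, h.map_nodal, h.map_succ, h.node_succ_eq]

end IsClosedNodeSequence

/-- The product `α r * S r (α (r - 1)) * S r (S (r - 1) (α (r - 2))) * ⋯` of `r` roots. -/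
def rootProd {A : Type*} [CommRing A] (S : ℕ → A →+* A) (α : ℕ → A) : ℕ → A
  | 0 => 1
  | r + 1 => α (r + 1) * S (r + 1) (rootProd S α r)

section RootProd

open Polynomial Lagrange

variable {K A : Type*} [Field K] [CommRing A] [Algebra K A] {S : ℕ → A →+* A} {α x : ℕ → A} {p : ℕ}

theorem rootProd_succ (S : ℕ → A →+* A) (α : ℕ → A) (r : ℕ) :
    rootProd S α (r + 1) = α (r + 1) * S (r + 1) (rootProd S α r) :=
  rfl

theorem IsClosedNodeSequence.associated_rootProd (h : IsClosedNodeSequence K S α x p) {r : ℕ}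
    (hr : r ≤ p) : Associated (rootProd S α r) ((nodal (Finset.range r) x).eval (x r)) := by
  induction r with
  | zero => simp [rootProd]
  | succ r ih =>
    have hnodal : S (r + 1) ((nodal (Finset.range r) x).eval (x r)) =
        (nodal (Finset.range r) x).eval (x (r + 1)) := by
      rw [← eval_map_apply, h.map_nodal, h.map_succ]
    have hroot : Associated (α (r + 1)) (x (r + 1) - x r) := by
      rw [← neg_sub]
      exact (h.associated_sub hr).neg_right
    rw [rootProd_succ, eval_nodal_range_succ, mul_comm, ← hnodal]
    exact ((ih (by lia)).map (S (r + 1))).mul_mul hroot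

theorem IsClosedNodeSequence.associated_rootProd_succ (h : IsClosedNodeSequence K S α x p) :
    Associated (rootProd S α (p + 1)) (α (p + 1) * (nodal (Finset.range p) x).eval (x p)) := by
  rw [rootProd_succ, ← h.map_eval_nodal]
  exact ((h.associated_rootProd le_rfl).map (S (p + 1))).mul_left (α (p + 1))

end RootProd

section NewtonExpansion

open Polynomial Lagrange

variable {A R : Type*} [CommRing A] [Ring R]

/-- The Newton interpolation sum `∑ s < n, (∏ t < s, (y - x t)) Z s` with nodes `x` and divided
differences `Z`, where `A` acts on `Z` through `φ`. -/
def newtonSum (φ : A →+* R) (x : ℕ → A) (Z : ℕ → R) (n : ℕ) (y : A) : R :=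
  ∑ s ∈ Finset.range n, φ ((nodal (Finset.range s) x).eval y) * Z s

theorem newtonSum_succ (φ : A →+* R) (x : ℕ → A) (Z : ℕ → R) (n : ℕ) (y : A) :
    newtonSum φ x Z (n + 1) y =
      newtonSum φ x Z n y + φ ((nodal (Finset.range n) x).eval y) * Z n :=
  Finset.sum_range_succ _ n

theorem newtonSum_of_node (φ : A →+* R) (x : ℕ → A) (Z : ℕ → R) (n : ℕ) :
    newtonSum φ x Z (n + 1) (x n) = newtonSum φ x Z (n + 2) (x n) := by
  rw [newtonSum_succ _ _ _ (n + 1), eval_nodal_at_node (Finset.self_mem_range_succ n), map_zero,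
    zero_mul, add_zero]

/-- Elements `σ r`, `Z r` of a ring over `A` for which the `Z r` behave like the iterated divided
differences of `Z 0` at the first `p + 1` nodes and `σ r` like the reflection `S r`. -/
structure IsNewtonSystem (φ : A →+* R) (S : ℕ → A →+* A) (x : ℕ → A) (σ Z : ℕ → R) (p : ℕ) :
    Prop extends IsNodeSequence S x where
  periodic_sigma : Function.Periodic σ 2
  sigma_mul_map (r : ℕ) (a : A) : σ r * φ a = φ (S r a) * σ r
  sigma_mul_self (r : ℕ) : σ r * Z r = Z r
  sigma_succ_mul {r : ℕ} (hr : r < p) : σ (r + 1) * Z r = Z r - φ (x r - x (r + 1)) * Z (r + 1)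

namespace IsNewtonSystem

variable {φ : A →+* R} {S : ℕ → A →+* A} {x : ℕ → A} {σ Z : ℕ → R} {p : ℕ}

theorem sigma_mul_newtonSum (h : IsNewtonSystem φ S x σ Z p) {n r : ℕ} (hn : n ≤ p + 1)
    (hr : Even (r + n)) : σ (r + 1) * newtonSum φ x Z n (x r) = newtonSum φ x Z n (x (r + 1)) := by
  induction n using Nat.twoStepInduction with
  | zero => simp [newtonSum]
  | one =>
    have hσ : σ (r + 1) = σ 0 := eq_of_periodic_two h.periodic_sigma hr
    simp [newtonSum, hσ, h.sigma_mul_self]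
  | more n ih _ =>
    have hr' : Even (r + n) := by simpa [← add_assoc, Nat.even_add_one] using hr
    have hrn : Even (r + 1 + (n + 1)) := by rwa [add_right_comm, add_assoc r]
    have hσ : σ (r + 1) = σ (n + 1) := eq_of_periodic_two h.periodic_sigma hrn
    have hS : S (r + 1) = S (n + 1) := eq_of_periodic_two h.periodic hrn
    have hnodal : S (n + 1) ((nodal (Finset.range n) x).eval (x r)) =
        (nodal (Finset.range n) x).eval (x (r + 1)) := by
      rw [← eval_map_apply, h.map_nodal, ← hS, h.map_succ]
    have hnode : S (n + 1) (x r - x n) = x (r + 1) - x (n + 1) := by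
      rw [map_sub, h.map_succ, ← hS, h.map_succ]
    simp only [newtonSum_succ, eval_nodal_range_succ, mul_add]
    rw [ih (by lia) hr', hσ, ← mul_assoc, ← mul_assoc, h.sigma_mul_map, h.sigma_mul_map, map_mul,
      hnodal, hnode, mul_assoc, mul_assoc, h.sigma_succ_mul (by lia), h.sigma_mul_self]
    simp only [map_mul, map_sub]
    noncomm_ring

theorem descProd_mul (h : IsNewtonSystem φ S x σ Z p) {r : ℕ} (hr : r ≤ p) :
    descProd σ r * Z 0 = newtonSum φ x Z (r + 1) (x r) := by
  induction r with
  | zero => simp [descProd, newtonSum]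
  | succ r ih =>
    rw [descProd_succ, mul_assoc, ih (by lia), newtonSum_of_node,
      h.sigma_mul_newtonSum (by lia) ⟨r + 1, by ring⟩]

theorem map_eval_nodal_mul_eq_zero (h : IsNewtonSystem φ S x σ Z p) (hx : x (p + 1) = x p)
    (hσ : descProd σ (p + 1) = descProd σ p * σ 0) :
    φ ((nodal (Finset.range p) x).eval (x p)) * (Z p - σ (p + 1) * Z p) = 0 := by
  have hinv : S (p + 1) ((nodal (Finset.range p) x).eval (x p)) =
      (nodal (Finset.range p) x).eval (x p) := by
    rw [← eval_map_apply, h.map_nodal, h.map_succ, hx]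
  have hE : σ (p + 1) * newtonSum φ x Z (p + 1) (x p) = newtonSum φ x Z (p + 1) (x p) := by
    rw [← h.descProd_mul le_rfl, ← mul_assoc, ← descProd_succ, hσ, mul_assoc, h.sigma_mul_self]
  have hE' : σ (p + 1) * newtonSum φ x Z p (x p) = newtonSum φ x Z p (x p) := by
    rw [h.sigma_mul_newtonSum (by lia) ⟨p, rfl⟩, hx]
  rw [newtonSum_succ, mul_add, hE', add_right_inj, ← mul_assoc, h.sigma_mul_map, hinv,
    mul_assoc] at hE
  rw [mul_sub, hE, sub_self]

end IsNewtonSystem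

end NewtonExpansion

section DemazureStable

open Polynomial Lagrange

theorem divByMonic_mul {A : Type*} [CommRing A] (f : A[X]) {g h : A[X]} (hg : g.Monic)
    (hh : h.Monic) : f /ₘ (g * h) = f /ₘ g /ₘ h := by
  nontriviality A
  refine (div_modByMonic_unique (f /ₘ g /ₘ h) (f %ₘ g + g * (f /ₘ g %ₘ h)) (hg.mul hh)
    ⟨?_, ?_⟩).1
  · rw [add_assoc, mul_assoc, ← mul_add, modByMonic_add_div, modByMonic_add_div]
  · refine (degree_add_le _ _).trans_lt (max_lt ?_ ?_)
    · rw [hh.degree_mul]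
      refine (degree_modByMonic_lt f hg).trans_le ?_
      exact le_add_of_nonneg_right (zero_le_degree_iff.mpr hh.ne_zero)
    · rw [hg.degree_mul_comm, hg.degree_mul_comm h, hg.degree_mul, hg.degree_mul]
      exact WithBot.add_lt_add_right (degree_ne_bot.mpr hg.ne_zero) (degree_modByMonic_lt _ hh)

theorem derivative_divByMonic {A : Type*} [CommRing A] {f g : A[X]} (hf : f.Monic) (hg : g.Monic)
    (hfg : f.natDegree = g.natDegree + 1) :
    derivative f /ₘ g = C (f.natDegree : A) := by
  nontriviality A
  refine (div_modByMonic_unique _ (derivative f - g * C (f.natDegree : A)) hg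
    ⟨sub_add_cancel _ _, ?_⟩).1
  rw [degree_eq_natDegree hg.ne_zero, degree_lt_iff_coeff_zero]
  intro m hm
  rw [coeff_sub, coeff_derivative, coeff_mul_C]
  rcases hm.eq_or_lt with rfl | hm
  · rw [← hfg, hf.coeff_natDegree, hg.coeff_natDegree, hfg]
    push_cast
    ring
  · rw [coeff_eq_zero_of_natDegree_lt (by lia), coeff_eq_zero_of_natDegree_lt hm]
    ring

variable {A : Type*} [CommRing A]

/-- `τ` is a reflection of the ring `A` with root `γ`: it negates `γ` and is trivial modulo `γ`. -/
structure IsReflection (γ : A) (τ : A →+* A) : Prop where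
  map_root : τ γ = -γ
  root_dvd_sub (a : A) : γ ∣ a - τ a

theorem IsReflection.conj {γ : A} {τ s : A →+* A} (h : IsReflection γ τ)
    (hs : Function.Involutive s) : IsReflection (s γ) (s.comp (τ.comp s)) where
  map_root := by simp [hs γ, h.map_root]
  root_dvd_sub a := by simpa [hs a] using map_dvd s (h.root_dvd_sub (s a))

theorem IsReflection.root_dvd_root {γ γ' : A} {τ : A →+* A} (h : IsReflection γ τ)
    (h' : IsReflection γ' τ) (h2 : IsUnit (2 : A)) : γ ∣ γ' := by
  have := h.root_dvd_sub γ'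
  rwa [h'.map_root, sub_neg_eq_add, ← two_mul, h2.dvd_mul_left] at this

/-- `J` is stable under the divided differences `a ↦ (a - S r a) / α r`. -/
def IsDemazureStable (J : Ideal A) (S : ℕ → A →+* A) (α : ℕ → A) : Prop :=
  ∀ r a b, a ∈ J → a - S r a = α r * b → b ∈ J

variable {J : Ideal A} {S : ℕ → A →+* A} {α x : ℕ → A}

theorem IsDemazureStable.map_mem (hJ : IsDemazureStable J S α)
    (hα : ∀ r, IsReflection (α r) (S r)) (r : ℕ) {a : A} (ha : a ∈ J) : S r a ∈ J := by
  obtain ⟨b, hb⟩ := (hα r).root_dvd_sub a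
  rw [← sub_sub_cancel a (S r a), hb]
  exact J.sub_mem ha (J.mul_mem_left _ (hJ r a b ha hb))

theorem IsDemazureStable.eval_divByMonic_nodal_mem (hJ : IsDemazureStable J S α)
    (hx : IsNodeSequence S x) {F : A[X]} (hF : ∀ r, F.map (S r) = F) (hF0 : F.eval (x 0) ∈ J)
    {n : ℕ} (hα : ∀ r < n, Associated (α (r + 1)) (x r - x (r + 1))) :
    (F /ₘ nodal (Finset.range n) x).eval (x n) ∈ J := by
  induction n with
  | zero => simpa using hF0
  | succ n ih =>
    set Q := F /ₘ nodal (Finset.range n) x with hQ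
    have hQn : Q.eval (x n) ∈ J := ih fun r hr => hα r (by lia)
    have hQS : S (n + 1) (Q.eval (x n)) = Q.eval (x (n + 1)) := by
      rw [← eval_map_apply, hQ, map_divByMonic _ nodal_monic, hF, hx.map_nodal, hx.map_succ]
    have hQ' : F /ₘ nodal (Finset.range (n + 1)) x = Q /ₘ (X - C (x n)) := by
      rw [nodal_range_succ, divByMonic_mul _ nodal_monic (monic_X_sub_C _)]
    obtain ⟨u, hu⟩ := (hα n n.lt_succ_self).symm
    have hdiff : Q.eval (x n) - Q.eval (x (n + 1)) =
        (x n - x (n + 1)) * (Q /ₘ (X - C (x n))).eval (x (n + 1)) := by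
      have := congrArg (eval (x (n + 1))) (X_sub_C_mul_divByMonic_eq_sub_modByMonic Q (x n))
      simp only [modByMonic_X_sub_C_eq_C_eval, eval_mul, eval_sub, eval_X, eval_C] at this
      linear_combination this
    rw [hQ', ← J.unit_mul_mem_iff_mem u⁻¹.isUnit]
    refine hJ (n + 1) _ _ hQn ?_
    rw [hQS, hdiff, ← hu, mul_assoc, Units.mul_inv_cancel_left]

theorem IsClosedNodeSequence.map_nodal_succ {K : Type*} [Field K] [Algebra K A] {p : ℕ}
    (hx : IsClosedNodeSequence K S α x p) (r : ℕ) :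
    (nodal (Finset.range (p + 1)) x).map (S r) = nodal (Finset.range (p + 1)) x := by
  rcases eq_or_eq_succ_of_periodic_two hx.periodic r (p + 1) with h | h
  · rw [h, nodal_range_succ, Polynomial.map_mul, hx.map_nodal, Polynomial.map_sub, map_X, map_C,
      hx.map_succ, hx.node_succ_eq]
  · rw [h, hx.map_nodal]

theorem IsDemazureStable.eval_nodal_mem_of_root_mul_mem {K : Type*} [Field K] [CharZero K]
    [Algebra K A] (hJ : IsDemazureStable J S α) (hα : ∀ r, IsReflection (α r) (S r)) {p : ℕ}
    (hx : IsClosedNodeSequence K S α x p)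
    (hmem : α (p + 1) * (nodal (Finset.range p) x).eval (x p) ∈ J) :
    (nodal (Finset.range p) x).eval (x p) ∈ J := by
  have h2 : IsUnit (2 : A) := by
    simpa only [map_ofNat] using (IsUnit.mk0 (2 : K) two_ne_zero).map (algebraMap K A)
  rw [← J.unit_mul_mem_iff_mem h2]
  refine hJ (p + 1) _ _ hmem ?_
  rw [map_mul, hx.map_eval_nodal, (hα _).map_root]
  ring

theorem IsDemazureStable.eval_node_mem (hJ : IsDemazureStable J S α)
    (hα : ∀ r, IsReflection (α r) (S r)) (hx : IsNodeSequence S x) {F : A[X]}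
    (hF : ∀ r, F.map (S r) = F) {n : ℕ} (hmem : F.eval (x n) ∈ J) : F.eval (x 0) ∈ J := by
  induction n with
  | zero => exact hmem
  | succ n ih =>
    refine ih ?_
    rw [← hx.map_self_succ, ← hF (n + 1), eval_map_apply]
    exact hJ.map_mem hα (n + 1) hmem

theorem IsDemazureStable.eq_top {K : Type*} [Field K] [CharZero K] [Algebra K A]
    (hJ : IsDemazureStable J S α) (hα : ∀ r, IsReflection (α r) (S r)) {p : ℕ}
    (hx : IsClosedNodeSequence K S α x p)
    (hmem : α (p + 1) * (nodal (Finset.range p) x).eval (x p) ∈ J) : J = ⊤ := by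
  cases subsingleton_or_nontrivial A
  · exact Subsingleton.elim J ⊤
  have hunit : IsUnit ((p + 1 : ℕ) : A) := by
    simpa only [map_natCast] using
      (IsUnit.mk0 ((p + 1 : ℕ) : K) (Nat.cast_ne_zero.mpr p.succ_ne_zero)).map (algebraMap K A)
  set P := nodal (Finset.range (p + 1)) x with hP
  have hderiv_map (r : ℕ) : (derivative P).map (S r) = derivative P := by
    rw [← derivative_map, hP, hx.map_nodal_succ]
  have hderiv_last : (derivative P).eval (x p) ∈ J := by
    rw [hP, eval_nodal_derivative_eval_node_eq (Finset.self_mem_range_succ p),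
      Finset.range_add_one, Finset.erase_insert Finset.notMem_range_self]
    exact hJ.eval_nodal_mem_of_root_mul_mem hα hx hmem
  have hderiv_zero : (derivative P).eval (x 0) ∈ J :=
    hJ.eval_node_mem hα hx.toIsNodeSequence hderiv_map hderiv_last
  -- The divided difference of `P'` at the nodes `x 0, …, x p` is its leading coefficient `p + 1`.
  have hlead := hJ.eval_divByMonic_nodal_mem hx.toIsNodeSequence hderiv_map hderiv_zero
    fun _ => hx.associated_sub
  rw [derivative_divByMonic nodal_monic nodal_monic (by simp [natDegree_nodal]), eval_C,
    natDegree_nodal, Finset.card_range] at hlead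
  exact J.eq_top_of_isUnit_mem hlead hunit

end DemazureStable

/-- Elements `G r` of a ring over `A` which square to zero and satisfy the commutation relation of
the divided differences `a ↦ (a - S r a) / α r` attached to alternating reflections `S r`. -/
structure IsDemazureSystem {K A R : Type*} [CommRing K] [CommRing A] [Algebra K A] [Ring R]
    [Algebra K R] (φ : A →ₐ[K] R) (S : ℕ → A →+* A) (α : ℕ → A) (G : ℕ → R) : Prop where
  periodic : Function.Periodic G 2
  periodic_root : Function.Periodic α 2
  isReflection (r : ℕ) : IsReflection (α r) (S r)
  mul_self (r : ℕ) : G r * G r = 0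
  mul_map {r : ℕ} {a b : A} (h : a - S r a = α r * b) : G r * φ a = φ b + φ (S r a) * G r

namespace IsDemazureSystem

open Polynomial Lagrange

variable {K A R : Type*} [CommRing K] [CommRing A] [Algebra K A] [Ring R] [Algebra K R]
  {φ : A →ₐ[K] R} {S : ℕ → A →+* A} {α : ℕ → A} {G : ℕ → R}

theorem periodic_altProd (h : IsDemazureSystem φ S α G) (n : ℕ) :
    Function.Periodic (fun r => altProd (G r) (G (r + 1)) n) 2 := fun r => by
  simp only [h.periodic r, show r + 2 + 1 = r + 1 + 2 from rfl, h.periodic (r + 1)]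

theorem mul_altProd (h : IsDemazureSystem φ S α G) (r n : ℕ) :
    G (r + 1) * altProd (G r) (G (r + 1)) n = altProd (G (r + 1)) (G (r + 2)) (n + 1) := by
  rw [altProd_succ, h.periodic]

theorem mul_altProd_self (h : IsDemazureSystem φ S α G) (r : ℕ) {n : ℕ} (hn : n ≠ 0) :
    G r * altProd (G r) (G (r + 1)) n = 0 := by
  obtain ⟨n, rfl⟩ := Nat.exists_eq_succ_of_ne_zero hn
  rw [altProd_succ, ← mul_assoc, h.mul_self, zero_mul]

theorem shift (h : IsDemazureSystem φ S α G) :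
    IsDemazureSystem φ (fun r => S (r + 1)) (fun r => α (r + 1)) (fun r => G (r + 1)) where
  periodic r := h.periodic (r + 1)
  periodic_root r := h.periodic_root (r + 1)
  isReflection r := h.isReflection (r + 1)
  mul_self r := h.mul_self (r + 1)
  mul_map hab := h.mul_map hab

theorem sigma_mul_map (h : IsDemazureSystem φ S α G) (r : ℕ) (a : A) :
    (1 - φ (α r) * G r) * φ a = φ (S r a) * (1 - φ (α r) * G r) := by
  obtain ⟨b, hb⟩ := (h.isReflection r).root_dvd_sub a
  have hφ := congrArg φ hb
  rw [map_sub, map_mul, sub_eq_iff_eq_add] at hφ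
  have hcomm : φ (α r) * φ (S r a) = φ (S r a) * φ (α r) := by rw [← map_mul, mul_comm, map_mul]
  rw [sub_mul, one_mul, mul_assoc, h.mul_map hb, mul_add, ← mul_assoc (φ _) (φ _) (G r), hcomm, hφ]
  noncomm_ring

theorem map_rootProd_mul_altProd_eq_zero {K : Type*} [Field K] [Algebra K A] [Algebra K R]
    {φ : A →ₐ[K] R} (h : IsDemazureSystem φ S α G) {x : ℕ → A} {p : ℕ}
    (hx : IsClosedNodeSequence K S α x p)
    (hσ : altProd (1 - φ (α 0) * G 0) (1 - φ (α 1) * G 1) (p + 1) =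
      altProd (1 - φ (α 1) * G 1) (1 - φ (α 0) * G 0) (p + 1)) {n : ℕ} (hn : p + 2 ≤ n) :
    φ (rootProd S α (p + 1)) * altProd (G (p + 1)) (G (p + 2)) n = 0 := by
  obtain ⟨q, rfl⟩ := Nat.exists_eq_add_of_le hn
  choose! c hc hcx using fun r => hx.exists_sub_eq_smul (r := r)
  set σ : ℕ → R := fun r => 1 - φ (α r) * G r with hσ_def
  have hσ_per : Function.Periodic σ 2 := fun r => by
    simp only [hσ_def, h.periodic_root r, h.periodic r]
  set Z : ℕ → R := fun r =>
    (∏ t ∈ Finset.range r, c t)⁻¹ • altProd (G r) (G (r + 1)) (r + (q + 1)) with hZ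
  have hnewton : IsNewtonSystem (φ : A →+* R) S x σ Z p :=
    { hx with
      periodic_sigma := hσ_per
      sigma_mul_map := h.sigma_mul_map
      sigma_mul_self := fun r => by
        rw [hZ, hσ_def, mul_smul_comm, sub_mul, mul_assoc, h.mul_altProd_self r (by lia), mul_zero,
          sub_zero, one_mul]
      sigma_succ_mul := fun {r} hr => by
        rw [hcx r hr, RingHom.coe_coe, map_smul, smul_mul_assoc]
        simp only [hZ, hσ_def, mul_smul_comm, sub_mul, one_mul, smul_sub, mul_assoc, h.mul_altProd,
          Finset.prod_range_succ, mul_inv_rev, mul_smul, smul_inv_smul₀ (hc r hr)]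
        rw [add_right_comm] }
  have key := hnewton.map_eval_nodal_mul_eq_zero hx.node_succ_eq
    (descProd_succ_eq_of_braid hσ_per hσ)
  simp only [hZ, hσ_def, mul_smul_comm, sub_mul, one_mul, ← smul_sub, sub_sub_cancel, mul_assoc,
    h.mul_altProd, RingHom.coe_coe] at key
  rw [inv_smul_eq_iff₀ (Finset.prod_ne_zero_iff.mpr fun r hr => hc r (Finset.mem_range.mp hr)),
    smul_zero, ← mul_assoc, ← map_mul, mul_comm] at key
  obtain ⟨b, hb⟩ := hx.associated_rootProd_succ.symm.dvd
  rw [hb, mul_comm, map_mul, mul_assoc, add_right_comm p 2 q]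
  rw [show p + (q + 1) + 1 = p + q + 2 by ring] at key
  rw [key, mul_zero]

end IsDemazureSystem

/-- The ideal of all `a` which annihilate, through `φ`, every alternating product of the `G r` with
at least `N` factors. -/
def altProdAnnihilator {K A R : Type*} [CommRing K] [CommRing A] [Algebra K A] [Ring R]
    [Algebra K R] (φ : A →ₐ[K] R) (G : ℕ → R) (N : ℕ) : Ideal A where
  carrier := {a | ∀ r n, N ≤ n → φ a * altProd (G r) (G (r + 1)) n = 0}
  zero_mem' r n _ := by rw [map_zero, zero_mul]
  add_mem' ha hb r n hn := by rw [map_add, add_mul, ha r n hn, hb r n hn, add_zero]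
  smul_mem' c a ha r n hn := by rw [smul_eq_mul, map_mul, mul_assoc, ha r n hn, mul_zero]

theorem IsDemazureSystem.isDemazureStable_altProdAnnihilator {K A R : Type*} [CommRing K]
    [CommRing A] [Algebra K A] [Ring R] [Algebra K R] {φ : A →ₐ[K] R} {S : ℕ → A →+* A}
    {α : ℕ → A} {G : ℕ → R} (h : IsDemazureSystem φ S α G) {N : ℕ} (hN : N ≠ 0) :
    IsDemazureStable (altProdAnnihilator φ G N) S α := by
  intro r a b ha hb
  have hstraight (W : R) : G r * (φ a * W) = φ b * W + φ (S r a) * (G r * W) := by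
    rw [← mul_assoc, h.mul_map hb, add_mul, mul_assoc]
  have hsame (n : ℕ) (hn : N ≤ n) : φ b * altProd (G r) (G (r + 1)) n = 0 := by
    have := hstraight (altProd (G r) (G (r + 1)) n)
    rwa [h.mul_altProd_self r (by lia), ha r n hn, mul_zero, mul_zero, add_zero, eq_comm] at this
  have hother (n : ℕ) (hn : N ≤ n) : φ b * altProd (G (r + 1)) (G (r + 2)) n = 0 := by
    have hS : φ (S r a) * altProd (G r) (G (r + 1)) (n + 1) = 0 := by
      rw [← sub_sub_cancel a (S r a), hb, map_sub, sub_mul, ha r _ (by lia), map_mul, mul_assoc,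
        hsame _ (by lia), mul_zero, sub_zero]
    have := hstraight (altProd (G (r + 1)) (G (r + 2)) n)
    rw [ha (r + 1) n hn, h.periodic r, ← altProd_succ, hS, mul_zero, add_zero] at this
    rw [h.periodic r, ← this]
  intro q n hn
  rcases eq_or_eq_succ_of_periodic_two (h.periodic_altProd n) q r with hq | hq
  · rw [hq, hsame n hn]
  · rw [hq, hother n hn]

theorem IsDemazureSystem.altProd_eq_zero_of_braid {K A R : Type*} [Field K] [CharZero K]
    [CommRing A] [Algebra K A] [Ring R] [Algebra K R] {φ : A →ₐ[K] R} {S : ℕ → A →+* A}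
    {α x x' : ℕ → A} {G : ℕ → R} (h : IsDemazureSystem φ S α G) {p : ℕ}
    (hx : IsClosedNodeSequence K S α x p)
    (hx' : IsClosedNodeSequence K (fun r => S (r + 1)) (fun r => α (r + 1)) x' p)
    (hdvd : rootProd (fun r => S (r + 1)) (fun r => α (r + 1)) (p + 1) ∣ rootProd S α (p + 1))
    (hσ : altProd (1 - φ (α 0) * G 0) (1 - φ (α 1) * G 1) (p + 1) =
      altProd (1 - φ (α 1) * G 1) (1 - φ (α 0) * G 0) (p + 1)) (r : ℕ) {n : ℕ} (hn : p + 2 ≤ n) :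
    altProd (G r) (G (r + 1)) n = 0 := by
  have hmem : rootProd S α (p + 1) ∈ altProdAnnihilator φ G (p + 2) := by
    intro q n hn
    rcases eq_or_eq_succ_of_periodic_two (h.periodic_altProd n) q (p + 1) with hq | hq
    · rw [hq, h.map_rootProd_mul_altProd_eq_zero hx hσ hn]
    · obtain ⟨b, hb⟩ := hdvd
      have hzero := h.shift.map_rootProd_mul_altProd_eq_zero hx'
        (by rw [h.periodic_root 0, h.periodic 0, hσ]) hn
      rw [hq, hb, mul_comm, map_mul, mul_assoc, hzero, mul_zero]
  have htop : altProdAnnihilator φ G (p + 2) = ⊤ :=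
    (h.isDemazureStable_altProdAnnihilator (by lia)).eq_top h.isReflection hx
      ((altProdAnnihilator φ G (p + 2)).mem_of_dvd hx.associated_rootProd_succ.dvd hmem)
  have hone : (1 : A) ∈ altProdAnnihilator φ G (p + 2) := htop ▸ Submodule.mem_top
  simpa using hone r n hn

section Dihedral

open Module

variable {K E : Type*} [Field K] [AddCommGroup E] [Module K E] {a b c : E} {f g : Dual K E}
  {w : End K E} {N : ℕ}

-- A nontrivial unipotent operator in characteristic zero has infinite order; here `w` is unipotent
-- on the span of `v` and `w v`.
theorem apply_eq_self_of_apply_sub_eq [CharZero K] (hN : N ≠ 0) (hw : w ^ N = 1) {v : E}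
    (h : w (w v - v) = w v - v) : w v = v := by
  have hpow (n : ℕ) : (w ^ n) v = v + (n : K) • (w v - v) := by
    induction n with
    | zero => simp
    | succ n ih =>
      rw [pow_succ', End.mul_apply, ih, map_add, map_smul, h]
      push_cast
      module
  have hzero := hpow N
  rw [hw, End.one_apply, left_eq_add, smul_eq_zero, sub_eq_zero] at hzero
  exact hzero.resolve_left (Nat.cast_ne_zero.mpr hN)

theorem eq_one_of_forall_sub_mem_span [CharZero K] (hN : N ≠ 0) (hw : w ^ N = 1)
    (hab : ∀ v, w v - v ∈ Submodule.span K {a, b}) (ha : w a - a ∈ Submodule.span K {c})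
    (hb : w b - b ∈ Submodule.span K {c}) (hc : w c = c) : w = 1 := by
  have hfix {v : E} (hv : w v - v ∈ Submodule.span K {c}) : w v = v := by
    obtain ⟨r, hr⟩ := Submodule.mem_span_singleton.mp hv
    exact apply_eq_self_of_apply_sub_eq hN hw (by rw [← hr, map_smul, hc])
  ext v
  obtain ⟨r, q, hrq⟩ := Submodule.mem_span_pair.mp (hab v)
  refine apply_eq_self_of_apply_sub_eq hN hw ?_
  rw [← hrq, map_add, map_smul, map_smul, hfix ha, hfix hb]

theorem preReflection_mul_self (h : f a = 2) : preReflection a f * preReflection a f = 1 :=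
  LinearMap.ext (involutive_preReflection h)

theorem preReflection_apply_two_smul_sub (h : f a = 2) (b : E) :
    preReflection a f ((2 : K) • b - f b • a) = (2 : K) • b - f b • a := by
  rw [preReflection_apply, map_sub, map_smul, map_smul, h]
  module

theorem preReflection_mul_preReflection_pow_sub_mem_span (a b : E) (f g : Dual K E) (n : ℕ)
    (v : E) :
    ((preReflection a f * preReflection b g) ^ n) v - v ∈ Submodule.span K {a, b} := by
  induction n with
  | zero => simp
  | succ n ih =>
    set u := ((preReflection a f * preReflection b g) ^ n) v
    rw [pow_succ', End.mul_apply, ← sub_add_sub_cancel _ u]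
    refine add_mem (Submodule.mem_span_pair.mpr ⟨-f (preReflection b g u), -g u, ?_⟩) ih
    rw [End.mul_apply, preReflection_apply a, preReflection_apply b]
    module

theorem pow_apply_eq_self_of_pow_apply_eq_self {s t : End K E} (hs : s * s = 1) (ht : t * t = 1)
    {n : ℕ} {v : E} (h : ((s * t) ^ n) v = v) : ((s * t) ^ n) (t v) = t v := by
  have hinv : (s * t) ^ n * (t * s) ^ n = 1 :=
    pow_mul_pow_eq_one n (by rw [mul_assoc, ← mul_assoc t, ht, one_mul, hs])
  have hv : ((t * s) ^ n) (t v) = t v := by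
    rw [← End.mul_apply, ← mul_mul_pow_swap, End.mul_apply, h]
  nth_rw 1 [← hv]
  rw [← End.mul_apply, hinv, End.one_apply]

theorem preReflection_mul_preReflection_eq_one [CharZero K] (ha : f a = 2) (hb : g b = 2)
    (hfg : f b * g a = 4) (hN : N ≠ 0) (hpow : (preReflection a f * preReflection b g) ^ N = 1) :
    preReflection a f * preReflection b g = 1 := by
  have hab (v : E) := preReflection_mul_preReflection_pow_sub_mem_span a b f g 1 v
  simp only [pow_one] at hab
  refine eq_one_of_forall_sub_mem_span (c := (2 : K) • b - f b • a) hN hpow hab ?_ ?_ ?_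
  · refine Submodule.mem_span_singleton.mpr ⟨-(g a / 2), ?_⟩
    simp only [End.mul_apply, preReflection_apply, map_sub, map_smul, ha]
    match_scalars
    · ring
    · linear_combination (-1 / 2) * hfg
  · refine Submodule.mem_span_singleton.mpr ⟨-1, ?_⟩
    simp only [End.mul_apply, preReflection_apply, map_sub, map_smul, hb]
    module
  · have hθ : g ((2 : K) • b - f b • a) = 0 := by
      rw [map_sub, map_smul, map_smul, hb, smul_eq_mul, smul_eq_mul, hfg]
      norm_num
    rw [End.mul_apply, preReflection_apply b, hθ, zero_smul, sub_zero,
      preReflection_apply_two_smul_sub ha]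

theorem preReflection_mul_preReflection_pow_apply_root (hb : g b = 2) (hfb : f b = 0) (n : ℕ) :
    ((preReflection a f * preReflection b g) ^ n) b = (-1 : K) ^ n • b := by
  induction n with
  | zero => rw [pow_zero, pow_zero, one_smul, End.one_apply]
  | succ n ih =>
    rw [pow_succ', End.mul_apply, ih, map_smul, End.mul_apply, preReflection_apply_self hb,
      preReflection_apply, map_neg, hfb]
    module

theorem preReflection_mul_preReflection_sq_eq_one [CharZero K] (ha : f a = 2) (hb : g b = 2)
    (hfb : f b = 0) (hN : N ≠ 0) (hpow : (preReflection a f * preReflection b g) ^ N = 1) :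
    (preReflection a f * preReflection b g) ^ 2 = 1 := by
  have hb_fixed : ((preReflection a f * preReflection b g) ^ 2) b = b := by
    rw [preReflection_mul_preReflection_pow_apply_root hb hfb, neg_one_sq, one_smul]
  refine eq_one_of_forall_sub_mem_span (c := b) hN
    (by rw [← pow_mul, mul_comm, pow_mul, hpow, one_pow])
    (preReflection_mul_preReflection_pow_sub_mem_span a b f g 2) ?_ ?_ hb_fixed
  · refine Submodule.mem_span_singleton.mpr ⟨2 * g a, ?_⟩
    simp only [sq, End.mul_apply, preReflection_apply, map_sub, map_smul, ha, hb, hfb]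
    module
  · rw [hb_fixed, sub_self]
    exact zero_mem _

-- `2 b - f b • a` is a cyclic vector for the dihedral group on the span of `a` and `b` unless
-- `f b * g a = 4` or `f b = 0`; in these cases finite order forces the rotation to have order at
-- most two.
theorem pow_eq_one_of_pow_apply_eq [CharZero K] (ha : f a = 2) (hb : g b = 2) (hN : N ≠ 0)
    (hpow : (preReflection a f * preReflection b g) ^ N = 1) {n : ℕ}
    (hn : ((preReflection a f * preReflection b g) ^ n) ((2 : K) • b - f b • a) =
      (2 : K) • b - f b • a) :
    (preReflection a f * preReflection b g) ^ n = 1 := by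
  by_cases hfg : f b * g a = 4
  · rw [preReflection_mul_preReflection_eq_one ha hb hfg hN hpow, one_pow]
  by_cases hfb : f b = 0
  · have hneg : (-1 : K) ^ n = 1 := by
      rw [hfb, zero_smul, sub_zero, map_smul,
        preReflection_mul_preReflection_pow_apply_root hb hfb] at hn
      have := congrArg g hn
      simpa [hb] using this
    obtain ⟨r, rfl⟩ := (neg_one_pow_eq_one_iff_even (by norm_num)).mp hneg
    rw [← two_mul, pow_mul, preReflection_mul_preReflection_sq_eq_one ha hb hfb hN hpow, one_pow]
  · set w := (preReflection a f * preReflection b g) ^ n with hw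
    have hb_fixed : w b = b := by
      have hθ := pow_apply_eq_self_of_pow_apply_eq_self (preReflection_mul_self ha)
        (preReflection_mul_self hb) hn
      rw [← hw, preReflection_apply, map_sub, hn, sub_right_inj, map_smul] at hθ
      refine smul_right_injective E ?_ hθ
      rw [map_sub, map_smul, map_smul, hb, smul_eq_mul, smul_eq_mul]
      exact fun h => hfg (by linear_combination -h)
    have ha_fixed : w a = a := by
      rw [map_sub, map_smul, map_smul, hb_fixed, sub_right_inj] at hn
      exact smul_right_injective E hfb hn
    refine eq_one_of_forall_sub_mem_span (c := b) hN
      (by rw [hw, ← pow_mul, mul_comm, pow_mul, hpow, one_pow])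
      (preReflection_mul_preReflection_pow_sub_mem_span a b f g n) ?_ ?_ hb_fixed
    · simp [ha_fixed]
    · simp [hb_fixed]

theorem apply_descProd_preReflection_ne_zero [CharZero K] {a : ℕ → E}
    {f : ℕ → Dual K E} {t : ℕ → End K E}
    (htr : ∀ r, t r = preReflection (a r) (f r)) (ht : Function.Periodic t 2)
    (hf : ∀ r, f r (a r) = 2) {r : ℕ} (hr : r + 1 < orderOf (t 0 * t 1)) :
    f (r + 1) (descProd t r ((2 : K) • a 1 - f 0 (a 1) • a 0)) ≠ 0 := by
  intro hzero
  have hsq (r : ℕ) : t r * t r = 1 := by rw [htr, preReflection_mul_self (hf r)]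
  set θ := (2 : K) • a 1 - f 0 (a 1) • a 0 with hθ
  have hθ_fixed : t 0 θ = θ := by
    rw [htr, preReflection_apply_two_smul_sub (hf 0)]
  have hfix : descProd t (r + 1) θ = (descProd t r * t 0) θ := by
    rw [descProd_succ, End.mul_apply, htr, preReflection_apply, hzero, zero_smul, sub_zero,
      End.mul_apply, hθ_fixed]
  have ht_unit (r : ℕ) : IsUnit (t r) := ⟨⟨t r, t r, hsq r, hsq r⟩, rfl⟩
  have hunit : IsUnit (descProd t r * t 0) := (isUnit_descProd ht_unit r).mul (ht_unit 0)
  rw [descProd_eq_mul_pow ht hsq (c := r) (n := r + 1) (by ring), End.mul_apply] at hfix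
  have hθ_pow := ((End.isUnit_iff _).mp hunit).injective hfix
  have hpow := pow_orderOf_eq_one (t 0 * t 1)
  rw [htr 0, htr 1] at *
  have := pow_eq_one_of_pow_apply_eq (hf 0) (hf 1) (by lia) hpow hθ_pow
  exact absurd (orderOf_le_of_pow_eq_one r.succ_pos this) (by lia)

end Dihedral

section PolynomialAction

open MvPolynomial Module

variable {d n : ℕ}

theorem eval_lin (θ : Dual ℂ (Vd d)) (v : Vd d) : eval v (lin θ) = θ v := by
  rw [lin, map_sum]
  conv_rhs => rw [pi_eq_sum_univ' v, map_sum]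
  refine Finset.sum_congr rfl fun j _ => ?_
  rw [smul_eval, eval_X, map_smul, smul_eq_mul, mul_comm]

theorem lin_sub (θ θ' : Dual ℂ (Vd d)) : lin (θ - θ') = lin θ - lin θ' := by
  simp only [lin, LinearMap.sub_apply, sub_smul, Finset.sum_sub_distrib]

theorem lin_smul (c : ℂ) (θ : Dual ℂ (Vd d)) : lin (c • θ) = c • lin θ := by
  simp only [lin, LinearMap.smul_apply, Finset.smul_sum, smul_assoc]

theorem lin_proj (j : Fin d) : lin (LinearMap.proj j) = X j := by
  refine MvPolynomial.funext fun v => ?_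
  rw [eval_lin, eval_X, LinearMap.proj_apply]

theorem eval_glAct (g : GL (Fin d) ℂ) (f : Ad d) (v : Vd d) :
    eval v (glAct g f) = eval (((g⁻¹ : GL (Fin d) ℂ) : Matrix (Fin d) (Fin d) ℂ).mulVec v) f := by
  induction f using MvPolynomial.induction_on with
  | C a => simp [glAct]
  | add p q hp hq => rw [map_add, map_add, map_add, hp, hq]
  | mul_X p i hp =>
    rw [map_mul, map_mul, hp, map_mul]
    congr 1
    simp [glAct, smul_eval, Matrix.mulVec, dotProduct]

theorem glAct_one (f : Ad d) : glAct 1 f = f := by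
  refine MvPolynomial.funext fun v => ?_
  rw [eval_glAct, inv_one, Units.val_one, Matrix.one_mulVec]

theorem glAct_mul (g h : GL (Fin d) ℂ) (f : Ad d) : glAct (g * h) f = glAct g (glAct h f) := by
  refine MvPolynomial.funext fun v => ?_
  rw [eval_glAct, eval_glAct, eval_glAct, mul_inv_rev, Units.val_mul, Matrix.mulVec_mulVec]

/-- The representation of `Γ` on `V*`, contragredient to the tautological one. -/
def dualRep (S : CoxeterSetup d n) : Representation ℂ S.Γ (Dual ℂ (Vd d)) :=
  Representation.dual
    ((Matrix.toLinAlgEquiv' : _ ≃ₐ[ℂ] _).toMonoidHom.comp ((Units.coeHom _).comp S.Γ.subtype))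

variable (S : CoxeterSetup d n)

theorem dualRep_apply (g : S.Γ) (θ : Dual ℂ (Vd d)) (v : Vd d) :
    dualRep S g θ v = θ (((g⁻¹ : GL (Fin d) ℂ) : Matrix (Fin d) (Fin d) ℂ).mulVec v) :=
  rfl

theorem glAct_lin (g : S.Γ) (θ : Dual ℂ (Vd d)) :
    glAct (g : GL (Fin d) ℂ) (lin θ) = lin (dualRep S g θ) := by
  refine MvPolynomial.funext fun v => ?_
  rw [eval_glAct, eval_lin, eval_lin, dualRep_apply]

theorem dualRep_injective : Function.Injective (dualRep S) := by
  intro g h hgh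
  rw [← inv_inj]
  refine Subtype.ext (Units.ext (Matrix.mulVec_injective (funext fun v => ?_)))
  rw [← sub_eq_zero, ← forall_dual_apply_eq_zero_iff ℂ]
  intro θ
  rw [map_sub, sub_eq_zero]
  exact congrFun (congrArg (fun T : End ℂ (Dual ℂ (Vd d)) => ⇑(T θ)) hgh) v

end PolynomialAction

section SimpleReflection

open MvPolynomial Module

variable {d n : ℕ} (S : CoxeterSetup d n)

theorem simpleReflection_mul_self (i : Fin n) : S.s i * S.s i = 1 := by
  refine Subtype.ext (Units.ext (Matrix.mulVec_injective (funext fun v => ?_)))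
  simp only [Subgroup.coe_mul, Units.val_mul, ← Matrix.mulVec_mulVec, S.refl, map_sub, map_smul,
    S.pairing, OneMemClass.coe_one, Units.val_one, Matrix.one_mulVec, smul_eq_mul]
  module

theorem dualRep_simpleReflection (i : Fin n) :
    dualRep S (S.s i) = preReflection (S.α i) (Dual.eval ℂ (Vd d) (S.coroot i)) := by
  refine LinearMap.ext fun θ => LinearMap.ext fun v => ?_
  have hinv : (S.s i : GL (Fin d) ℂ)⁻¹ = S.s i :=
    inv_eq_of_mul_eq_one_left (congrArg Subtype.val (simpleReflection_mul_self S i))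
  rw [dualRep_apply, hinv, S.refl, preReflection_apply, map_sub, map_smul, Dual.eval_apply,
    LinearMap.sub_apply, LinearMap.smul_apply, smul_eq_mul, smul_eq_mul, mul_comm]

theorem glAct_simpleReflection_lin (i : Fin n) (θ : Dual ℂ (Vd d)) :
    glAct (S.s i : GL (Fin d) ℂ) (lin θ) = lin θ - θ (S.coroot i) • lin (S.α i) := by
  rw [glAct_lin, dualRep_simpleReflection, preReflection_apply, lin_sub, lin_smul, Dual.eval_apply]

theorem lin_root_ne_zero (i : Fin n) : lin (S.α i) ≠ 0 := by
  intro h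
  have heval := eval_lin (S.α i) (S.coroot i)
  rw [h, map_zero, S.pairing] at heval
  exact two_ne_zero heval.symm

theorem mOrd_pos (k l : Fin n) : 0 < mOrd S k l :=
  have := S.finite
  orderOf_pos _

theorem mOrd_comm (k l : Fin n) : mOrd S l k = mOrd S k l := by
  have hinv : (S.s k * S.s l)⁻¹ = S.s l * S.s k := by
    rw [mul_inv_rev, inv_eq_of_mul_eq_one_left (simpleReflection_mul_self S k),
      inv_eq_of_mul_eq_one_left (simpleReflection_mul_self S l)]
  rw [mOrd, mOrd, ← hinv, orderOf_inv]

theorem orderOf_dualRep_mul (k l : Fin n) :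
    orderOf (dualRep S (S.s k) * dualRep S (S.s l)) = mOrd S k l := by
  rw [← map_mul, orderOf_injective _ (dualRep_injective S), mOrd]

/-- The action of the simple reflection `s_i` on polynomials as a ring endomorphism. -/
def simpleAct (i : Fin n) : Ad d →+* Ad d :=
  glAct (S.s i : GL (Fin d) ℂ)

theorem simpleAct_apply (i : Fin n) (f : Ad d) :
    simpleAct S i f = glAct (S.s i : GL (Fin d) ℂ) f :=
  rfl

theorem simpleAct_involutive (i : Fin n) : Function.Involutive (simpleAct S i) := fun f => by
  rw [simpleAct_apply, simpleAct_apply, ← glAct_mul, ← Subgroup.coe_mul,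
    simpleReflection_mul_self, OneMemClass.coe_one, glAct_one]

theorem isReflection_simpleAct (i : Fin n) : IsReflection (lin (S.α i)) (simpleAct S i) where
  map_root := by
    rw [simpleAct_apply, glAct_simpleReflection_lin, S.pairing]
    module
  root_dvd_sub f := by
    induction f using MvPolynomial.induction_on with
    | C a => simp [simpleAct]
    | add p q hp hq =>
      rw [map_add, add_sub_add_comm]
      exact hp.add hq
    | mul_X p j hp =>
      have hX : lin (S.α i) ∣ X j - simpleAct S i (X j) := by
        rw [← lin_proj, simpleAct_apply, glAct_simpleReflection_lin, sub_sub_cancel, smul_eq_C_mul]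
        exact Dvd.intro_left _ rfl
      rw [map_mul]
      exact dvd_mul_sub_mul hp hX

end SimpleReflection

section DescentAlgebra

open MvPolynomial Module

variable {d n : ℕ} (S : CoxeterSetup d n)

theorem GG_mul_self (i : Fin n) : GG S i * GG S i = 0 := by
  rw [GG, ← map_mul, RingQuot.mkRingHom_rel (DRel.sq i), map_zero]

theorem mkRingHom_algebraMap (c : ℂ) :
    RingQuot.mkRingHom (DRel S) (algebraMap ℂ _ c) = algebraMap ℂ (DD S) c := by
  rw [← RingQuot.mkAlgHom_coe ℂ]
  exact AlgHom.commutes _ c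

/-- The canonical map `A → 𝔇` as a homomorphism of `ℂ`-algebras. -/
def ofAAlgHom : Ad d →ₐ[ℂ] DD S where
  __ := ofA S
  commutes' c := (RingQuot.mkRingHom_rel (DRel.scalar (S := S) c)).symm.trans
    (mkRingHom_algebraMap S c)

theorem GG_mul_ofA_lin (i : Fin n) (θ : Dual ℂ (Vd d)) :
    GG S i * ofAAlgHom S (lin θ) = algebraMap ℂ _ (θ (S.coroot i)) +
      ofAAlgHom S (simpleAct S i (lin θ)) * GG S i := by
  have hrel := RingQuot.mkRingHom_rel (DRel.straighten (S := S) i θ)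
  rw [map_mul, map_add, map_mul, mkRingHom_algebraMap] at hrel
  exact hrel

theorem GG_mul_ofA (i : Fin n) {a b : Ad d} (h : a - simpleAct S i a = lin (S.α i) * b) :
    GG S i * ofAAlgHom S a = ofAAlgHom S b + ofAAlgHom S (simpleAct S i a) * GG S i := by
  induction a using MvPolynomial.induction_on generalizing b with
  | C c =>
    have hc : simpleAct S i (C c) = C c :=
      (glAct (S.s i : GL (Fin d) ℂ)).commutes c
    obtain rfl : b = 0 := by
      refine mul_left_cancel₀ (lin_root_ne_zero S i) ?_
      rw [← h, hc, sub_self, mul_zero]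
    rw [hc, map_zero, zero_add, ← algebraMap_eq, AlgHom.commutes, Algebra.commutes]
  | add p q hp hq =>
    obtain ⟨p', hp'⟩ := (isReflection_simpleAct S i).root_dvd_sub p
    obtain ⟨q', hq'⟩ := (isReflection_simpleAct S i).root_dvd_sub q
    obtain rfl : b = p' + q' := by
      refine mul_left_cancel₀ (lin_root_ne_zero S i) ?_
      rw [← h, map_add]
      linear_combination hp' + hq'
    rw [map_add, mul_add, hp hp', hq hq', map_add, map_add, map_add, add_mul]
    abel
  | mul_X p j hp =>
    obtain ⟨p', hp'⟩ := (isReflection_simpleAct S i).root_dvd_sub p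
    have hX := glAct_simpleReflection_lin S i (LinearMap.proj j)
    have hGX := GG_mul_ofA_lin S i (LinearMap.proj j)
    rw [← simpleAct_apply, lin_proj, smul_eq_C_mul] at hX
    rw [lin_proj] at hGX
    obtain rfl : b = p' * X j + simpleAct S i p * C ((LinearMap.proj j) (S.coroot i)) := by
      refine mul_left_cancel₀ (lin_root_ne_zero S i) ?_
      rw [← h, map_mul]
      linear_combination X j * hp' - simpleAct S i p * hX
    rw [map_mul, ← mul_assoc, hp hp', add_mul, mul_assoc _ (GG S i), hGX, mul_add, map_add, map_mul,
      map_mul, map_mul, map_mul, ← algebraMap_eq, AlgHom.commutes, add_assoc, mul_assoc]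

end DescentAlgebra

section RootSequence

open MvPolynomial

variable {d n : ℕ} (S : CoxeterSetup d n) (k l : Fin n)

theorem rootSeqP_zero : rootSeqP S k l 0 = lin (S.α k) :=
  glAct_one _

theorem rootSeqP_succ (j : ℕ) : rootSeqP S k l (j + 1) = simpleAct S k (rootSeqP S l k j) := by
  rw [rootSeqP, altProd_succ, Subgroup.coe_mul, glAct_mul]
  simp only [Nat.even_add_one, ite_not]
  rfl

theorem rootProd_alternate (r : ℕ) :
    rootProd (fun r => simpleAct S (alternate k l r)) (fun r => lin (S.α (alternate k l r))) r =
      ∏ j ∈ Finset.range r, rootSeqP S (alternate k l r) (alternate l k r) j := by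
  induction r with
  | zero => rfl
  | succ r ih =>
    rw [rootProd_succ, ih, map_prod, Finset.prod_range_succ', rootSeqP_zero, mul_comm,
      alternate_succ, alternate_succ]
    simp only [rootSeqP_succ]

theorem isReflection_rootSeqP (j : ℕ) :
    IsReflection (rootSeqP S k l j)
      (glAct ((altProd (S.s k) (S.s l) (2 * j + 1) : S.Γ) : GL (Fin d) ℂ) : Ad d →+* Ad d) := by
  induction j generalizing k l with
  | zero =>
    rw [rootSeqP_zero, altProd_succ, altProd, mul_one]
    exact isReflection_simpleAct S k
  | succ j ih =>
    rw [rootSeqP_succ, altProd_two_mul_add_three]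
    convert (ih l k).conj (simpleAct_involutive S k) using 1
    refine RingHom.ext fun f => ?_
    simp only [Subgroup.coe_mul, glAct_mul, RingHom.coe_coe, RingHom.comp_apply, simpleAct_apply]

theorem rootSeqP_dvd_rootSeqP {i j : ℕ} (h : i + j + 1 = mOrd S k l) :
    rootSeqP S k l i ∣ rootSeqP S l k j := by
  have hrefl : altProd (S.s l) (S.s k) (2 * j + 1) = altProd (S.s k) (S.s l) (2 * i + 1) :=
    (altProd_eq_of_add_eq_two_mul (simpleReflection_mul_self S k) (simpleReflection_mul_self S l)
      (pow_orderOf_eq_one _) (by rw [← mOrd, ← h]; ring)).symm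
  have h2 : IsUnit (2 : Ad d) := by
    rw [← map_ofNat C 2]
    exact (IsUnit.mk0 (2 : ℂ) two_ne_zero).map C
  exact (isReflection_rootSeqP S k l i).root_dvd_root (hrefl ▸ isReflection_rootSeqP S l k j) h2

theorem DeltaP_dvd_DeltaP : DeltaP S k l ∣ DeltaP S l k := by
  rw [DeltaP, DeltaP, mOrd_comm S k l, ← Finset.prod_range_reflect (rootSeqP S l k)]
  refine Finset.prod_dvd_prod_of_dvd _ _ fun j hj => rootSeqP_dvd_rootSeqP S k l ?_
  have := Finset.mem_range.mp hj
  lia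

theorem rootProd_alternate_mOrd :
    rootProd (fun r => simpleAct S (alternate k l r)) (fun r => lin (S.α (alternate k l r)))
      (mOrd S k l) = DeltaP S (alternate k l (mOrd S k l)) (alternate l k (mOrd S k l)) := by
  rw [rootProd_alternate, DeltaP]
  congr 2
  rcases Nat.even_or_odd (mOrd S k l) with h | h
  · simp [alternate, h]
  · simp [alternate, Nat.not_even_iff_odd.mpr h, mOrd_comm S k l]

theorem rootProd_alternate_swap_dvd :
    rootProd (fun r => simpleAct S (alternate l k r)) (fun r => lin (S.α (alternate l k r)))
        (mOrd S k l) ∣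
      rootProd (fun r => simpleAct S (alternate k l r)) (fun r => lin (S.α (alternate k l r)))
        (mOrd S k l) := by
  rw [rootProd_alternate_mOrd S k l, ← mOrd_comm S k l, rootProd_alternate_mOrd S l k]
  exact DeltaP_dvd_DeltaP S _ _

end RootSequence

section FundamentalWeight

open Module

variable {d n : ℕ} (S : CoxeterSetup d n) (k l : Fin n)

/-- The linear form `2 α_l - α_l(α_k^∨) α_k`. It is fixed by `s_k` and plays the part of the
fundamental weight attached to `l` in the dihedral group generated by `s_k` and `s_l`. -/
def dihedralWeight : Dual ℂ (Vd d) :=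
  (2 : ℂ) • S.α l - S.α l (S.coroot k) • S.α k

/-- The forms `θ, s_l θ, s_k s_l θ, …`, where `θ` is the dihedral weight. -/
def weightOrbit (r : ℕ) : Dual ℂ (Vd d) :=
  descProd (fun r => dualRep S (S.s (alternate k l r))) r (dihedralWeight S k l)

theorem weightOrbit_succ (r : ℕ) :
    weightOrbit S k l (r + 1) = dualRep S (S.s (alternate k l (r + 1))) (weightOrbit S k l r) :=
  rfl

theorem dualRep_dihedralWeight :
    dualRep S (S.s k) (dihedralWeight S k l) = dihedralWeight S k l := by
  rw [dualRep_simpleReflection]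
  exact preReflection_apply_two_smul_sub (f := Dual.eval ℂ (Vd d) (S.coroot k)) (S.pairing k) _

theorem weightOrbit_sub (r : ℕ) :
    weightOrbit S k l r - weightOrbit S k l (r + 1) =
      weightOrbit S k l r (S.coroot (alternate k l (r + 1))) • S.α (alternate k l (r + 1)) := by
  rw [weightOrbit_succ, dualRep_simpleReflection, preReflection_apply, sub_sub_cancel,
    Dual.eval_apply]

theorem weightOrbit_coroot_ne_zero {r : ℕ} (hr : r + 1 < mOrd S k l) :
    weightOrbit S k l r (S.coroot (alternate k l (r + 1))) ≠ 0 := by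
  rw [← orderOf_dualRep_mul] at hr
  exact apply_descProd_preReflection_ne_zero (a := fun r => S.α (alternate k l r))
    (f := fun r => Dual.eval ℂ (Vd d) (S.coroot (alternate k l r)))
    (t := fun r => dualRep S (S.s (alternate k l r))) (fun r => dualRep_simpleReflection S _)
    ((alternate_periodic k l).comp fun i => dualRep S (S.s i)) (fun r => S.pairing _) hr

theorem weightOrbit_succ_eq_of_mOrd_eq {p : ℕ} (hp : mOrd S k l = p + 1) :
    weightOrbit S k l (p + 1) = weightOrbit S k l p := by
  set t : ℕ → End ℂ (Dual ℂ (Vd d)) := fun r => dualRep S (S.s (alternate k l r)) with ht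
  have ht_per : Function.Periodic t 2 := (alternate_periodic k l).comp fun i => dualRep S (S.s i)
  have hsq (r : ℕ) : t r * t r = 1 := by
    simp only [ht, ← map_mul, simpleReflection_mul_self, map_one]
  have hpow : (t 0 * t 1) ^ (p + 1) = 1 := by
    rw [← hp, ← orderOf_dualRep_mul]
    exact pow_orderOf_eq_one _
  have hprod : descProd t (p + 1) = descProd t p * t 0 := by
    rw [descProd_eq_mul_pow ht_per hsq (c := p) (n := p + 1) (by ring), hpow, mul_one]
  rw [weightOrbit, ← ht, hprod, End.mul_apply]
  exact congrArg ⇑(descProd t p) (dualRep_dihedralWeight S k l)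

theorem isClosedNodeSequence_weightOrbit {p : ℕ} (hp : mOrd S k l = p + 1) :
    IsClosedNodeSequence ℂ (fun r => simpleAct S (alternate k l r))
      (fun r => lin (S.α (alternate k l r))) (fun r => lin (weightOrbit S k l r)) p where
  periodic := (alternate_periodic k l).comp (simpleAct S)
  involutive r := simpleAct_involutive S _
  map_zero := (glAct_lin S (S.s k) _).trans (congrArg lin (dualRep_dihedralWeight S k l))
  map_succ r := glAct_lin S _ _
  exists_sub_eq_smul {r} hr :=
    ⟨_, weightOrbit_coroot_ne_zero S k l (r := r) (by lia), by
      rw [← lin_sub, weightOrbit_sub, lin_smul]⟩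
  node_succ_eq := congrArg lin (weightOrbit_succ_eq_of_mOrd_eq S k l hp)

end FundamentalWeight

section Braid

variable {d n : ℕ} {S : CoxeterSetup d n} {R : Type*} [Ring R] [Algebra ℂ R]

theorem isDemazureSystem_map_GG (π : DD S →ₐ[ℂ] R) (k l : Fin n) :
    IsDemazureSystem (π.comp (ofAAlgHom S)) (fun r => simpleAct S (alternate k l r))
      (fun r => lin (S.α (alternate k l r))) (fun r => π (GG S (alternate k l r))) where
  periodic := (alternate_periodic k l).comp fun i => π (GG S i)
  periodic_root := (alternate_periodic k l).comp fun i => lin (S.α i)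
  isReflection r := isReflection_simpleAct S _
  mul_self r := by rw [← map_mul, GG_mul_self, map_zero]
  mul_map {r a b} h := by
    simp only [AlgHom.comp_apply, ← map_mul, ← map_add, GG_mul_ofA S _ h]

theorem map_sigmaD (π : DD S →ₐ[ℂ] R) (i : Fin n) :
    π (sigmaD S i) = 1 - π (ofAAlgHom S (lin (S.α i))) * π (GG S i) := by
  rw [sigmaD, map_sub, map_one, map_mul]
  rfl

theorem altProd_map_GG_eq_zero_of_braid (π : DD S →ₐ[ℂ] R) {k l : Fin n}
    (hbraid : altProd (π (sigmaD S k)) (π (sigmaD S l)) (mOrd S k l) =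
      altProd (π (sigmaD S l)) (π (sigmaD S k)) (mOrd S k l)) :
    altProd (π (GG S k)) (π (GG S l)) (mOrd S k l + 1) = 0 ∧
      altProd (π (GG S l)) (π (GG S k)) (mOrd S k l + 1) = 0 := by
  obtain ⟨p, hp⟩ := Nat.exists_eq_add_one_of_ne_zero (mOrd_pos S k l).ne'
  have hdvd := rootProd_alternate_swap_dvd S k l
  have hx' := isClosedNodeSequence_weightOrbit S l k ((mOrd_comm S k l).trans hp)
  simp only [← alternate_succ k l] at hdvd hx'
  rw [hp] at hdvd hbraid ⊢
  simp only [map_sigmaD] at hbraid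
  have hzero (r : ℕ) := (isDemazureSystem_map_GG π k l).altProd_eq_zero_of_braid
    (isClosedNodeSequence_weightOrbit S k l hp) hx' hdvd hbraid r le_rfl
  exact ⟨hzero 0, hzero 1⟩

theorem altProd_succ_mem_braid_ideal_general (S : CoxeterSetup d n) (k l : Fin n) :
    altProd (GG S k) (GG S l) (mOrd S k l + 1) ∈
        TwoSidedIdeal.span {altProd (sigmaD S k) (sigmaD S l) (mOrd S k l) -
          altProd (sigmaD S l) (sigmaD S k) (mOrd S k l)} ∧
      altProd (GG S l) (GG S k) (mOrd S k l + 1) ∈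
        TwoSidedIdeal.span {altProd (sigmaD S k) (sigmaD S l) (mOrd S k l) -
          altProd (sigmaD S l) (sigmaD S k) (mOrd S k l)} := by
  set B := altProd (sigmaD S k) (sigmaD S l) (mOrd S k l) -
    altProd (sigmaD S l) (sigmaD S k) (mOrd S k l)
  let π := (TwoSidedIdeal.span {B}).ringCon.mkₐ ℂ
  have hker {x : DD S} : x ∈ TwoSidedIdeal.span {B} ↔ π x = 0 :=
    (TwoSidedIdeal.mem_iff _ x).trans (RingCon.eq _).symm
  have hbraid : π B = 0 := hker.mp (TwoSidedIdeal.subset_span rfl)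
  rw [map_sub, map_altProd, map_altProd, sub_eq_zero] at hbraid
  rw [hker, hker, map_altProd, map_altProd]
  exact altProd_map_GG_eq_zero_of_braid π hbraid

end Braid

/-- For `k ≠ l` with `m = m_{kl}`, the alternating products
`G_kG_lG_k⋯` and `G_lG_kG_l⋯` with `m + 1` factors both lie in the two-sided ideal
generated by the Coxeter braid relators. -/
theorem altProd_succ_mem_braid_ideal {d n : ℕ} (S : CoxeterSetup d n) (k l : Fin n)
    (hkl : k ≠ l) :
    altProd (GG S k) (GG S l) (mOrd S k l + 1) ∈ TwoSidedIdeal.span (coxeterBraidSet S) ∧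
    altProd (GG S l) (GG S k) (mOrd S k l + 1) ∈ TwoSidedIdeal.span (coxeterBraidSet S) := by
  have hle := TwoSidedIdeal.span_mono (Set.singleton_subset_iff.mpr
    (show _ ∈ coxeterBraidSet S from ⟨k, l, hkl, rfl⟩))
  exact (altProd_succ_mem_braid_ideal_general S k l).imp (hle ·) (hle ·)
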